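/- If k ≥ 4 is an even integer and G is a finite connected simple graph with n vertices, m edges, and maximum degree at most k, then the matching number satisfies α'(G) ≥ n/(k(k+1)) + m/(k+1) − 1/k. -/

import Mathlib

/-!
Write `α` for the matching number, `k = 2j`, and `o(H)` for the number of odd components of `H`.
The Tutte–Berge formula gives a set `S` with `n + |S| ≤ 2α + o(G - S)` (`exists_berge`; it follows
from Tutte's theorem applied to the join of `G` with a complete graph on `n - 2α - 2` vertices).
If the components `C` of `G - S` have `n_C` vertices and `e_C` edges, this reads
`|S| + ∑ ⌊n_C / 2⌋ ≤ α`.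

Suppose `S` is nonempty. By connectedness every `C` sends an edge to `S`, so some vertex of `C` has
degree less than `k` inside `C`. As `k` is even, this gives `e_C ≤ k n_C / 2 - 1`; together with
`e_C ≤ n_C (n_C - 1) / 2` one gets `n_C + k e_C ≤ k (k + 1) ⌊n_C / 2⌋ + 1`
(`component_bound_of_lt`). Let `E` be the number of edges meeting `S`, and `c` the number of
components. Then `m ≤ E + ∑ e_C`, `E ≤ k |S|`, and, contracting the components, `|S| + c ≤ E + 1`.
Summing over the components,
`n + k m ≤ |S| + k (k + 1) ∑ ⌊n_C / 2⌋ + c + k E ≤ k (k + 1) ∑ ⌊n_C / 2⌋ + (k + 1) E + 1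
  ≤ k (k + 1) α + 1`.

If `S` is empty, then `G` is the only component, and the weaker bound `component_bound`, valid
without a vertex of small degree, yields `n + k m ≤ k (k + 1) ⌊n / 2⌋ + (k + 1)`. In both cases
`n + k m ≤ k (k + 1) α + (k + 1)`, which is the claim multiplied by `k (k + 1)`.
-/

/-- The matching number of a simple graph: the maximum number of edges in a matching. -/
noncomputable def matchingNumber {V : Type*} (G : SimpleGraph V) : ℕ :=
  sSup {n | ∃ M : G.Subgraph, M.IsMatching ∧ M.edgeSet.ncard = n}

namespace MatchingBound

open Finset SimpleGraph

/-! ### The Tutte–Berge formula -/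

lemma ncard_edgeSet_le_matchingNumber {V : Type*} [Finite V] {G : SimpleGraph V}
    {M : G.Subgraph} (hM : M.IsMatching) : M.edgeSet.ncard ≤ matchingNumber G := by
  refine le_csSup ⟨G.edgeSet.ncard, ?_⟩ ⟨M, hM, rfl⟩
  rintro _ ⟨N, -, rfl⟩
  exact Set.ncard_le_ncard N.edgeSet_subset (Set.toFinite _)

lemma ncard_verts_le {V : Type*} [Finite V] {G : SimpleGraph V}
    {M : G.Subgraph} (hM : M.IsMatching) : M.verts.ncard ≤ 2 * matchingNumber G := by
  classical
  have := Fintype.ofFinite V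
  refine le_trans ?_ (Nat.mul_le_mul_left 2 (ncard_edgeSet_le_matchingNumber hM))
  have h1 : M.verts.toFinset ⊆ M.edgeSet.toFinset.biUnion Sym2.toFinset := by
    intro v hv
    obtain ⟨w, hw, -⟩ := hM (Set.mem_toFinset.1 hv)
    simp only [mem_biUnion, Set.mem_toFinset]
    exact ⟨s(v, w), hw, by simp⟩
  rw [Set.ncard_eq_toFinset_card', Set.ncard_eq_toFinset_card', mul_comm]
  refine (card_le_card h1).trans (card_biUnion_le_card_mul _ _ _ fun e _ => ?_)
  rw [Sym2.card_toFinset]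
  split_ifs <;> omega

lemma ncard_oddComponents_congr {V W : Type*} {G : SimpleGraph V} {H : SimpleGraph W}
    (φ : G ≃g H) : G.oddComponents.ncard = H.oddComponents.ncard := by
  refine Set.ncard_congr' (φ.connectedComponentEquiv.subtypeEquiv fun C => ?_)
  have : C.supp.ncard = (φ.connectedComponentEquiv C).supp.ncard :=
    Nat.card_congr (C.isoEquivSupp φ)
  change Odd _ ↔ Odd _
  rw [this]

/-- Tutte violators in terms of induced graphs instead of subgraphs with deleted vertices. -/
lemma isTutteViolator_iff {V : Type*} {G : SimpleGraph V} {u : Set V} :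
    G.IsTutteViolator u ↔ u.ncard < (G.induce uᶜ).oddComponents.ncard := by
  unfold IsTutteViolator
  rw [ncard_oddComponents_congr (H := G.induce uᶜ)]
  exact
    { toFun := fun v => ⟨v.1, v.2.2⟩
      invFun := fun v => ⟨v.1, trivial, v.2⟩
      left_inv := fun _ => rfl
      right_inv := fun _ => rfl
      map_rel_iff' := by
        rintro ⟨a, -, ha⟩ ⟨b, -, hb⟩
        simp at *
        tauto }

/-- The join of `G` with the complete graph on `d` new vertices. -/
def joinComplete {V : Type*} (G : SimpleGraph V) (d : ℕ) : SimpleGraph (V ⊕ Fin d) where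
  Adj
    | .inl a, .inl b => G.Adj a b
    | x, y => x ≠ y
  symm := by
    constructor
    rintro (a | a) (b | b) h
    · exact G.adj_symm h
    all_goals exact Ne.symm h
  loopless := by
    constructor
    rintro (a | a) h
    · exact G.loopless.irrefl _ h
    · exact h rfl

lemma joinComplete_adj_inr {V : Type*} {G : SimpleGraph V} {d : ℕ} {i : Fin d}
    {x : V ⊕ Fin d} (h : x ≠ .inr i) : (joinComplete G d).Adj x (.inr i) := by
  rcases x with x | x <;> exact h

/-- A perfect matching of the join leaves at most `d` vertices of `G` matched to new vertices; its
other edges at `G` form a matching of `G`. -/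
lemma card_le_of_isPerfectMatching_joinComplete {V : Type*} [Finite V] {G : SimpleGraph V} {d : ℕ}
    {M : (joinComplete G d).Subgraph} (hM : M.IsPerfectMatching) :
    Nat.card V ≤ 2 * matchingNumber G + d := by
  classical
  let N : G.Subgraph :=
    { verts := {v | ∃ w, M.Adj (.inl v) (.inl w)}
      Adj := fun v w => M.Adj (.inl v) (.inl w)
      adj_sub := fun h => M.adj_sub h
      edge_vert := fun {v w} h => ⟨w, h⟩
      symm := ⟨fun v w h => M.adj_symm h⟩ }
  have hN : N.IsMatching := by
    rintro v ⟨w, hw⟩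
    exact ⟨w, hw, fun y hy => Sum.inl_injective (hM.1.eq_of_adj_left hy hw)⟩
  have h1 : (N.verts)ᶜ.ncard ≤ d := by
    have key : ∀ v : ((N.verts)ᶜ : Set V), ∃ i : Fin d, M.Adj (.inl v.1) (.inr i) := by
      rintro ⟨v, hv⟩
      obtain ⟨w | i, hw, -⟩ := hM.1 (hM.2 (.inl v))
      · exact absurd ⟨w, hw⟩ hv
      · exact ⟨i, hw⟩
    choose f hf using key
    have hinj : Function.Injective f := by
      intro a b hab
      have ha := hf a
      rw [hab] at ha
      exact Subtype.ext (Sum.inl_injective (hM.1.eq_of_adj_left ha.symm (hf b).symm))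
    have := Nat.card_le_card_of_injective f hinj
    simpa [Nat.card_coe_set_eq] using this
  have h2 := ncard_verts_le hN
  have h3 := Set.ncard_add_ncard_compl N.verts
  omega

/-- The hard direction of the **Tutte–Berge formula**: if `d = n - 2α - 2 ≥ 0`, the join of `G` with
`d` new vertices has no perfect matching, hence has a Tutte violator `u`. Parity forces `u` to contain
all new vertices, and `S` is the rest of `u`. If `n ≤ 2α + 1`, the empty set works. -/
lemma exists_berge {V : Type*} [Finite V] (G : SimpleGraph V) :
    ∃ S : Set V, Nat.card V + S.ncard ≤
      2 * matchingNumber G + (G.induce Sᶜ).oddComponents.ncard := by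
  classical
  have hparity : ∀ S : Set V, (Odd (G.induce Sᶜ).oddComponents.ncard ↔ Odd (Sᶜ).ncard) := by
    intro S
    rw [odd_ncard_oddComponents, Nat.card_coe_set_eq]
  by_cases hsmall : Nat.card V ≤ 2 * matchingNumber G + 1
  · refine ⟨∅, ?_⟩
    have := hparity ∅
    rw [Set.compl_empty, Set.ncard_univ] at this
    rw [Set.ncard_empty, Set.compl_empty]
    rcases Nat.even_or_odd (Nat.card V) with h | h
    · obtain ⟨a, ha⟩ := h
      omega
    · have := (this.2 h).pos
      omega
  · obtain ⟨d, hd⟩ : ∃ d, Nat.card V = 2 * matchingNumber G + 2 + d :=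
      Nat.exists_eq_add_of_le (by omega)
    have hnot : ¬ ∃ M : (joinComplete G d).Subgraph, M.IsPerfectMatching := by
      rintro ⟨M, hM⟩
      have := card_le_of_isPerfectMatching_joinComplete hM
      omega
    rw [tutte] at hnot
    push Not at hnot
    obtain ⟨u, hu⟩ := hnot
    rw [isTutteViolator_iff] at hu
    have hcard : Nat.card (V ⊕ Fin d) = Nat.card V + d := by simp
    by_cases hsub : ∃ i : Fin d, Sum.inr i ∉ u
    · exfalso
      -- A surviving new vertex is adjacent to everything, so at most one component is left and `u`
      -- is empty; but then that component has an even number of vertices.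
      obtain ⟨i, hi⟩ := hsub
      let x₀ : (uᶜ : Set (V ⊕ Fin d)) := ⟨.inr i, hi⟩
      have hall : ∀ x, ((joinComplete G d).induce uᶜ).Reachable x x₀ := by
        intro x
        by_cases hx : x = x₀
        · rw [hx]
        · exact Adj.reachable (joinComplete_adj_inr fun h => hx (Subtype.ext h))
      have hsub : Subsingleton ((joinComplete G d).induce uᶜ).ConnectedComponent := by
        refine ⟨fun a b => ?_⟩
        induction a using ConnectedComponent.ind with | _ a =>
        induction b using ConnectedComponent.ind with | _ b =>
        exact ConnectedComponent.sound ((hall a).trans (hall b).symm)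
      have h1 : ((joinComplete G d).induce uᶜ).oddComponents.ncard ≤ 1 :=
        Set.ncard_le_one_iff_subsingleton.2 Set.subsingleton_of_subsingleton
      have hp := odd_ncard_oddComponents (G := (joinComplete G d).induce uᶜ)
      rw [Nat.card_coe_set_eq] at hp
      have h3 := Set.ncard_add_ncard_compl u
      have h4 : Odd (uᶜ).ncard := hp.1 (by
        rw [show ((joinComplete G d).induce uᶜ).oddComponents.ncard = 1 by omega]
        exact odd_one)
      obtain ⟨a, ha⟩ := h4
      omega
    · push Not at hsub
      refine ⟨Sum.inl ⁻¹' u, ?_⟩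
      have hiso : (joinComplete G d).induce uᶜ ≃g G.induce (Sum.inl ⁻¹' u)ᶜ :=
        RelIso.symm
        { toFun := fun v => ⟨.inl v.1, v.2⟩
          invFun := fun v => match v with
            | ⟨.inl a, h⟩ => ⟨a, h⟩
            | ⟨.inr i, h⟩ => absurd (hsub i) h
          left_inv := fun _ => rfl
          right_inv := by
            rintro ⟨a | i, h⟩
            · rfl
            · exact absurd (hsub i) h
          map_rel_iff' := Iff.rfl }
      rw [ncard_oddComponents_congr hiso] at hu
      have hu2 : u.ncard = (Sum.inl ⁻¹' u : Set V).ncard + d := by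
        have h1 : u = Sum.inl '' (Sum.inl ⁻¹' u : Set V) ∪ Set.range Sum.inr := by
          ext (a | i)
          · simp
          · simp [hsub i]
        have h2 : Disjoint (Sum.inl '' (Sum.inl ⁻¹' u : Set V)) (Set.range (Sum.inr : Fin d → _)) := by
          rw [Set.disjoint_left]
          rintro _ ⟨a, -, rfl⟩ ⟨i, hi⟩
          cases hi
        conv_lhs => rw [h1]
        rw [Set.ncard_union_eq h2 (Set.toFinite _) (Set.toFinite _),
          Set.ncard_image_of_injective _ Sum.inl_injective, ← Set.image_univ,
          Set.ncard_image_of_injective _ Sum.inr_injective, Set.ncard_univ]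
        simp
      have h3 := Set.ncard_add_ncard_compl (Sum.inl ⁻¹' u : Set V)
      have hp := hparity (Sum.inl ⁻¹' u)
      rw [Nat.odd_iff, Nat.odd_iff] at hp
      -- `o(G - S) > |S| + d`, and both sides have the same parity, so the difference is at least `2`.
      omega

/-! ### Edge counts inside a component -/

/-- The bounds for one component with `n` vertices and `e` edges and `k = 2j`, where `t = 1` if the
degree sum is known to be below the maximum `kn`, and `t = 0` otherwise. For odd `n < k` the bound
`e ≤ n(n-1)/2` is the efficient one, otherwise `e ≤ jn - t`. -/
lemma component_arith {j n e t : ℕ} (hj : 2 ≤ j) (h1 : 2 * e ≤ n * (n - 1))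
    (h2 : e + t ≤ j * n) (ht : t ≤ 1) :
    n + 2 * j * e + 2 * j * t ≤ 2 * j * (2 * j + 1) * (n / 2) + 2 * j + 1 := by
  obtain ⟨h, rfl | rfl⟩ := Nat.even_or_odd' n
  · rw [show 2 * h / 2 = h by omega]
    nlinarith [Nat.zero_le (j * h)]
  · rw [show (2 * h + 1) / 2 = h by omega]
    rw [Nat.add_sub_cancel] at h1
    rcases lt_or_ge h j with hlt | hge
    · obtain ⟨r, rfl⟩ := Nat.exists_eq_add_of_lt hlt
      have h3 : e ≤ (2 * h + 1) * h := by nlinarith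
      have h4 := Nat.mul_le_mul_left (2 * (h + r + 1)) h3
      have h5 := Nat.mul_le_mul_left (2 * (h + r + 1)) ht
      nlinarith [Nat.zero_le (h * h), Nat.zero_le (h * r), Nat.zero_le (h * h * r), Nat.zero_le (h * r * r)]
    · obtain ⟨r, rfl⟩ := Nat.exists_eq_add_of_le hge
      obtain ⟨i, rfl⟩ := Nat.exists_eq_add_of_le hj
      have h4 := Nat.mul_le_mul_left (2 * (2 + i)) h2
      nlinarith [Nat.zero_le (i * r)]

lemma two_mul_card_edgeFinset_le {W : Type*} [Fintype W] (C : SimpleGraph W)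
    [DecidableRel C.Adj] : 2 * #C.edgeFinset ≤ Fintype.card W * (Fintype.card W - 1) := by
  rw [← C.sum_degrees_eq_twice_card_edges, ← smul_eq_mul, ← Finset.card_univ]
  exact sum_le_card_nsmul _ _ _ fun v _ => Nat.le_sub_one_of_lt (C.degree_lt_card_verts v)

lemma component_bound {W : Type*} [Fintype W] (C : SimpleGraph W)
    [DecidableRel C.Adj] {j : ℕ} (hj : 2 ≤ j) (hdeg : ∀ v, C.degree v ≤ 2 * j) :
    Fintype.card W + 2 * j * #C.edgeFinset
      ≤ 2 * j * (2 * j + 1) * (Fintype.card W / 2) + 2 * j + 1 := by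
  have h := sum_le_card_nsmul univ (fun v => C.degree v) (2 * j) fun v _ => hdeg v
  rw [C.sum_degrees_eq_twice_card_edges, smul_eq_mul, Finset.card_univ] at h
  simpa using component_arith (t := 0) hj (two_mul_card_edgeFinset_le C) (by nlinarith) (by simp)

/-- The degree sum is even, so it is at most `k n - 2` as soon as one vertex has degree below `k`. -/
lemma component_bound_of_lt {W : Type*} [Fintype W] (C : SimpleGraph W)
    [DecidableRel C.Adj] {j : ℕ} (hj : 2 ≤ j) (hdeg : ∀ v, C.degree v ≤ 2 * j)
    (hlt : ∃ v, C.degree v < 2 * j) :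
    Fintype.card W + 2 * j * #C.edgeFinset
      ≤ 2 * j * (2 * j + 1) * (Fintype.card W / 2) + 1 := by
  obtain ⟨v, hv⟩ := hlt
  have h := sum_lt_sum (f := fun v => C.degree v) (g := fun _ => 2 * j) (s := univ) (fun v _ => hdeg v)
    ⟨v, mem_univ v, hv⟩
  rw [C.sum_degrees_eq_twice_card_edges, sum_const, smul_eq_mul, Finset.card_univ] at h
  have := component_arith (t := 1) hj (two_mul_card_edgeFinset_le C)
    (by rw [mul_comm _ (2 * j), mul_assoc] at h; omega) le_rfl
  omega


/-! ### Components and the edges meeting a vertex set -/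

lemma sum_card_component {W : Type*} [Finite W] (H : SimpleGraph W)
    [Fintype H.ConnectedComponent] :
    ∑ c : H.ConnectedComponent, c.supp.ncard = Nat.card W := by
  simp only [← Nat.card_coe_set_eq]
  rw [← Nat.card_sigma]
  exact Nat.card_congr (Equiv.sigmaFiberEquiv H.connectedComponentMk)

lemma ncard_edgeSet_le_sum_component {W : Type*} [Finite W] (H : SimpleGraph W)
    [Fintype H.ConnectedComponent] :
    H.edgeSet.ncard ≤ ∑ c : H.ConnectedComponent, c.toSimpleGraph.edgeSet.ncard := by
  have hsub : H.edgeSet ⊆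
      ⋃ c : H.ConnectedComponent, Sym2.map Subtype.val '' c.toSimpleGraph.edgeSet := by
    intro e he
    induction e using Sym2.ind with | _ a b =>
    rw [mem_edgeSet] at he
    have hb : b ∈ H.connectedComponentMk a := (ConnectedComponent.connectedComponentMk_eq_of_adj he).symm
    refine Set.mem_iUnion.2 ⟨H.connectedComponentMk a, s(⟨a, rfl⟩, ⟨b, hb⟩), ?_, rfl⟩
    exact he
  refine (Set.ncard_le_ncard hsub (Set.toFinite _)).trans ?_
  refine (Set.ncard_iUnion_le_of_fintype _).trans (sum_le_sum fun c _ => ?_)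
  exact Set.ncard_image_le (Set.toFinite _)

lemma ncard_oddComponents_eq_sum {W : Type*} [Finite W] (H : SimpleGraph W)
    [Fintype H.ConnectedComponent] :
    H.oddComponents.ncard = ∑ c : H.ConnectedComponent, c.supp.ncard % 2 := by
  classical
  rw [Set.ncard_eq_toFinset_card _ (Set.toFinite _), Finset.card_eq_sum_ones]
  rw [← Finset.sum_filter_add_sum_filter_not univ (fun c => c ∈ H.oddComponents)]
  have h0 : ∑ c with c ∉ H.oddComponents, c.supp.ncard % 2 = 0 :=
    sum_eq_zero fun c hc => by
      have : ¬ Odd (c.supp.ncard) := (mem_filter.1 hc).2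
      rwa [Nat.not_odd_iff] at this
  rw [h0, add_zero]
  refine sum_congr (by ext; simp) fun c hc => ?_
  have : Odd (c.supp.ncard) := (mem_filter.1 hc).2
  rw [Nat.odd_iff.1 this]

/-- The edges of `G` with at least one end in `S`. -/
def edgesMeeting {V : Type*} (G : SimpleGraph V) (S : Set V) : Set (Sym2 V) :=
  {e ∈ G.edgeSet | ∃ v ∈ S, v ∈ e}

lemma ncard_edgesMeeting_le {V : Type*} [Fintype V] {G : SimpleGraph V} [DecidableRel G.Adj]
    {k : ℕ} (hdeg : ∀ v, G.degree v ≤ k) (S : Set V) :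
    (edgesMeeting G S).ncard ≤ k * S.ncard := by
  classical
  have hsub : edgesMeeting G S ⊆ ↑(S.toFinset.biUnion fun v => G.incidenceFinset v) := by
    rintro e ⟨he, v, hv, hve⟩
    simp only [coe_biUnion, Set.mem_iUnion, coe_incidenceFinset]
    exact ⟨v, by simpa using hv, he, hve⟩
  refine (Set.ncard_le_ncard hsub (Set.toFinite _)).trans ?_
  rw [Set.ncard_coe_finset, Set.ncard_eq_toFinset_card', mul_comm]
  exact card_biUnion_le_card_mul _ _ _ fun v _ =>
    (G.card_incidenceFinset_eq_degree v).trans_le (hdeg v)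

lemma ncard_edgeSet_le_add {V : Type*} [Finite V] (G : SimpleGraph V) (S : Set V) :
    G.edgeSet.ncard ≤ (edgesMeeting G S).ncard + (G.induce Sᶜ).edgeSet.ncard := by
  have hsub : G.edgeSet ⊆ edgesMeeting G S ∪ Sym2.map Subtype.val '' (G.induce Sᶜ).edgeSet := by
    intro e he
    by_cases h : ∃ v ∈ S, v ∈ e
    · exact Or.inl ⟨he, h⟩
    · right
      induction e using Sym2.ind with | _ a b =>
      exact ⟨s(⟨a, fun ha => h ⟨a, ha, by simp⟩⟩, ⟨b, fun hb => h ⟨b, hb, by simp⟩⟩), he, rfl⟩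
  refine (Set.ncard_le_ncard hsub (Set.toFinite _)).trans ((Set.ncard_union_le _ _).trans ?_)
  exact Nat.add_le_add_left (Set.ncard_image_le (Set.toFinite _)) _

/-- In a connected graph, contracting every component of `G - S` leaves a connected graph on
`S` and the components, all of whose edges come from edges of `G` meeting `S`. -/
lemma ncard_add_card_component_le {V : Type*} [Finite V] {G : SimpleGraph V}
    (hG : G.Connected) (S : Set V) :
    S.ncard + Nat.card (G.induce Sᶜ).ConnectedComponent ≤ (edgesMeeting G S).ncard + 1 := by
  classical
  let f : V → S ⊕ (G.induce Sᶜ).ConnectedComponent := fun v =>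
    if h : v ∈ S then .inl ⟨v, h⟩ else .inr ((G.induce Sᶜ).connectedComponentMk ⟨v, h⟩)
  have hsurj : Function.Surjective f := by
    rintro (⟨v, hv⟩ | c)
    · exact ⟨v, by simp [f, hv]⟩
    · induction c using ConnectedComponent.ind with | _ v =>
      exact ⟨v.1, dif_neg v.2⟩
  have hreach : ∀ u v, (G.map f).Reachable (f u) (f v) := by
    intro u v
    obtain ⟨p⟩ := hG.preconnected u v
    induction p with
    | nil => exact Reachable.refl _
    | @cons a b c hab _ ih =>
      refine Reachable.trans ?_ ih
      by_cases h : f a = f b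
      · rw [h]
      · exact Adj.reachable (map_adj_apply' hab h)
  have hconn : (G.map f).Connected := by
    have := hG.nonempty.map f
    refine ⟨fun x y => ?_⟩
    obtain ⟨u, rfl⟩ := hsurj x
    obtain ⟨v, rfl⟩ := hsurj y
    exact hreach u v
  have hedge : (G.map f).edgeSet ⊆ Sym2.map f '' edgesMeeting G S := by
    intro e he
    induction e using Sym2.ind with | _ x y =>
    obtain ⟨hne, a, b, hab, rfl, rfl⟩ := he
    refine ⟨s(a, b), ⟨hab, ?_⟩, rfl⟩
    by_contra hcon
    have ha : a ∉ S := fun h => hcon ⟨a, h, by simp⟩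
    have hb : b ∉ S := fun h => hcon ⟨b, h, by simp⟩
    refine hne ?_
    simp only [f, dif_neg ha, dif_neg hb]
    have hadj : (G.induce Sᶜ).Adj ⟨a, ha⟩ ⟨b, hb⟩ := hab
    rw [ConnectedComponent.connectedComponentMk_eq_of_adj hadj]
  have h1 := hconn.card_vert_le_card_edgeSet_add_one
  have h2 := (Set.ncard_le_ncard hedge (Set.toFinite _)).trans (Set.ncard_image_le (Set.toFinite _))
  rw [Nat.card_sum, Nat.card_coe_set_eq, Nat.card_coe_set_eq] at h1
  omega

/-- Every component of `G - S` is joined to `S` by an edge. -/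
lemma exists_adj_mem {V : Type*} {G : SimpleGraph V} (hG : G.Connected) {S : Set V}
    (hS : S.Nonempty) (c : (G.induce Sᶜ).ConnectedComponent) :
    ∃ x : (Sᶜ : Set V), x ∈ c.supp ∧ ∃ y ∈ S, G.Adj x y := by
  obtain ⟨s, hs⟩ := hS
  obtain ⟨v, hv⟩ := c.nonempty_supp
  obtain ⟨p⟩ := hG.preconnected v.1 s
  obtain ⟨d, -, ⟨x, hx, hxd⟩, h2⟩ := p.exists_boundary_dart (Subtype.val '' c.supp) ⟨v, hv, rfl⟩
    (by rintro ⟨w, -, rfl⟩; exact w.2 hs)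
  have hadj : G.Adj x d.snd := hxd ▸ d.adj
  refine ⟨x, hx, d.snd, ?_, hadj⟩
  by_contra hd
  have hadj' : (G.induce Sᶜ).Adj x ⟨d.snd, hd⟩ := hadj
  exact h2 ⟨⟨d.snd, hd⟩, c.mem_supp_of_adj_mem_supp hx hadj', rfl⟩

lemma component_bound_of_mem {W : Type*} [Fintype W] {H : SimpleGraph W} [DecidableRel H.Adj]
    {j : ℕ} (hj : 2 ≤ j) (hdeg : ∀ v, H.degree v ≤ 2 * j) (c : H.ConnectedComponent)
    (hlt : ∃ x ∈ c.supp, H.degree x < 2 * j) :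
    c.supp.ncard + 2 * j * c.toSimpleGraph.edgeSet.ncard
      ≤ 2 * j * (2 * j + 1) * (c.supp.ncard / 2) + 1 := by
  classical
  have hle : ∀ v : c, c.toSimpleGraph.degree v ≤ H.degree v.1 := fun v => by
    rw [← card_neighborFinset_eq_degree, ← card_neighborFinset_eq_degree,
      ← card_map (Function.Embedding.subtype _)]
    refine card_le_card fun w hw => ?_
    obtain ⟨w', hw', rfl⟩ := mem_map.1 hw
    rw [mem_neighborFinset] at hw' ⊢
    exact hw'
  obtain ⟨x, hx, hlt⟩ := hlt
  have := component_bound_of_lt c.toSimpleGraph hj (fun v => (hle v).trans (hdeg _))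
    ⟨⟨x, hx⟩, (hle _).trans_lt hlt⟩
  rwa [← Nat.card_eq_fintype_card, ← Set.ncard_coe_finset, coe_edgeFinset] at this

lemma component_bound_induce {V : Type*} [Fintype V] {G : SimpleGraph V} [DecidableRel G.Adj]
    (hG : G.Connected) {j : ℕ} (hj : 2 ≤ j) (hdeg : ∀ v, G.degree v ≤ 2 * j)
    {S : Set V} (hS : S.Nonempty) (c : (G.induce Sᶜ).ConnectedComponent) :
    c.supp.ncard + 2 * j * c.toSimpleGraph.edgeSet.ncard
      ≤ 2 * j * (2 * j + 1) * (c.supp.ncard / 2) + 1 := by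
  classical
  have hsub : ∀ v : (Sᶜ : Set V), ((G.induce Sᶜ).neighborFinset v).map
      (Function.Embedding.subtype _) ⊆ G.neighborFinset v := by
    intro v w hw
    obtain ⟨w', hw', rfl⟩ := mem_map.1 hw
    rw [mem_neighborFinset] at hw' ⊢
    exact hw'
  refine component_bound_of_mem (H := G.induce Sᶜ) hj (fun v => le_trans ?_ (hdeg v)) c ?_
  · simpa only [card_map, card_neighborFinset_eq_degree] using card_le_card (hsub v)
  obtain ⟨x, hx, y, hy, hxy⟩ := exists_adj_mem hG hS c
  refine ⟨x, hx, lt_of_lt_of_le ?_ (hdeg x)⟩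
  rw [← card_neighborFinset_eq_degree, ← card_neighborFinset_eq_degree,
    ← card_map (Function.Embedding.subtype _)]
  refine card_lt_card ((hsub x).ssubset_of_mem_notMem (a := y) (by simpa using hxy) ?_)
  intro hmem
  obtain ⟨w, -, rfl⟩ := mem_map.1 hmem
  exact w.2 hy

/-! ### The bound -/

/-- The bound multiplied by `k (k + 1)`, with `k = 2j`, from a set `S` as in the Tutte–Berge formula. -/
lemma main_nat {V : Type*} [Fintype V] {G : SimpleGraph V} [DecidableRel G.Adj]
    (hG : G.Connected) {j : ℕ} (hj : 2 ≤ j) (hdeg : ∀ v, G.degree v ≤ 2 * j) {α : ℕ}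
    {S : Set V} (hS : Nat.card V + S.ncard ≤ 2 * α + (G.induce Sᶜ).oddComponents.ncard) :
    Nat.card V + 2 * j * G.edgeSet.ncard ≤ 2 * j * (2 * j + 1) * α + (2 * j + 1) := by
  classical
  have hcompl := Set.ncard_add_ncard_compl S
  have hsum := sum_card_component (G.induce Sᶜ)
  rw [Nat.card_coe_set_eq] at hsum
  have hhalf : S.ncard + ∑ c : (G.induce Sᶜ).ConnectedComponent, c.supp.ncard / 2 ≤ α := by
    have h1 : ∑ c : (G.induce Sᶜ).ConnectedComponent, c.supp.ncard =
        2 * ∑ c : (G.induce Sᶜ).ConnectedComponent, c.supp.ncard / 2 +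
          (G.induce Sᶜ).oddComponents.ncard := by
      rw [ncard_oddComponents_eq_sum, mul_sum, ← sum_add_distrib]
      exact sum_congr rfl fun c _ => (Nat.div_add_mod _ 2).symm
    omega
  rcases S.eq_empty_or_nonempty with rfl | hne
  · have h1 : (G.induce (∅ : Set V)ᶜ).oddComponents.ncard ≤ Nat.card V % 2 := by
      -- `G` itself is the only component.
      have hcon : (G.induce (∅ : Set V)ᶜ).Connected := by
        rw [Set.compl_empty]
        exact (induceUnivIso G).connected_iff.2 hG
      have := hcon.preconnected.subsingleton_connectedComponent
      have h1 : (G.induce (∅ : Set V)ᶜ).oddComponents.ncard ≤ 1 :=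
        Set.ncard_le_one_iff_subsingleton.2 Set.subsingleton_of_subsingleton
      have hp := odd_ncard_oddComponents (G := G.induce (∅ : Set V)ᶜ)
      rw [Nat.card_coe_set_eq, Nat.odd_iff, Nat.odd_iff] at hp
      rw [Set.ncard_empty] at hcompl
      omega
    rw [Set.ncard_empty] at hS
    have h2 := component_bound G hj hdeg
    rw [← Nat.card_eq_fintype_card, ← Set.ncard_coe_finset, coe_edgeFinset] at h2
    have h3 := Nat.mul_le_mul_left (2 * j * (2 * j + 1)) (show Nat.card V / 2 ≤ α by omega)
    omega
  · have h1 := sum_le_sum fun (c : (G.induce Sᶜ).ConnectedComponent) (_ : c ∈ univ) =>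
      component_bound_induce hG hj hdeg hne c
    rw [sum_add_distrib, sum_add_distrib, ← mul_sum, ← mul_sum, hsum, sum_const, smul_eq_mul,
      mul_one, Finset.card_univ, ← Nat.card_eq_fintype_card] at h1
    have h2 := ncard_edgeSet_le_sum_component (G.induce Sᶜ)
    have h3 := ncard_edgeSet_le_add G S
    have h4 := ncard_add_card_component_le hG S
    have h5 := ncard_edgesMeeting_le hdeg S
    have h6 := Nat.mul_le_mul_left (2 * j * (2 * j + 1)) hhalf
    have h7 := Nat.mul_le_mul_left (2 * j) (h3.trans (Nat.add_le_add_left h2 _))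
    have h8 := Nat.mul_le_mul_left (2 * j + 1) h5
    linarith

end MatchingBound

theorem stmt_5 (k : ℕ) (hk4 : 4 ≤ k) (hkeven : Even k)
    {V : Type*} [Fintype V] (G : SimpleGraph V) [DecidableRel G.Adj]
    (hconn : G.Connected) (hdeg : ∀ v, G.degree v ≤ k) :
    (Fintype.card V : ℝ) / ((k : ℝ) * ((k : ℝ) + 1)) + (G.edgeSet.ncard : ℝ) / ((k : ℝ) + 1)
      - 1 / (k : ℝ) ≤ (matchingNumber G : ℝ) := by
  obtain ⟨j, rfl⟩ := hkeven.exists_two_nsmul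
  simp only [smul_eq_mul] at *
  obtain ⟨S, hS⟩ := MatchingBound.exists_berge G
  have h := MatchingBound.main_nat hconn (by omega) hdeg hS
  rw [Nat.card_eq_fintype_card] at h
  have h' : (Fintype.card V : ℝ) + ((2 * j : ℕ) : ℝ) * G.edgeSet.ncard ≤
      ((2 * j : ℕ) : ℝ) * (((2 * j : ℕ) : ℝ) + 1) * matchingNumber G + (((2 * j : ℕ) : ℝ) + 1) := by
    exact_mod_cast h
  have hk : (0 : ℝ) < ((2 * j : ℕ) : ℝ) := by
    exact_mod_cast (by omega : 0 < 2 * j)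
  generalize ((2 * j : ℕ) : ℝ) = k at *
  have hk1 : 0 < k + 1 := by linarith
  rw [show (Fintype.card V : ℝ) / (k * (k + 1)) + (G.edgeSet.ncard : ℝ) / (k + 1) - 1 / k =
    (Fintype.card V + k * G.edgeSet.ncard - (k + 1)) / (k * (k + 1)) by field_simp,
    div_le_iff₀ (mul_pos hk hk1)]
  linarith
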